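/- Let A ⊆ ℝ⁺ satisfy 0 < p̄(A) < 1 and let (h_n)_{n∈ℕ} ∈ UMP(A). Then there exists a sequence ((q_n, t_n))_{n∈ℕ} of open intervals such that every (q_n, t_n) is a connected component of the interior of ℝ⁺ − A and lim_{n→∞} t_n/h_n = 1. -/

import Mathlib

/-!
Write `p` for the porosity, so `0 < p < 1`. Up to an error `h n / (n + 1)`, the value
`gapLength A (h n)` is the length of a gap `(a, b)` of `A` inside `(0, h n)`, and this gap lies in a
unique component `(q, t)` of the interior of `[0, ∞) \ A`. The component is bounded because `p < 1`
forces `A` to contain a positive point `c`, and `h n < c` for large `n`.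

The endpoint `t` is compared with `h n` by testing the porosity at the scales `(1 ± δ) * h n`.
If `t ≥ (1 + δ) * h n`, then `(a, (1 + δ) * h n)` is a gap; its relative length is at least
about `(δ + p) / (1 + δ)`, which exceeds `p` since `p < 1`. If `t ≤ (1 - δ) * h n`, then
`(a, b)` is a gap inside `(0, (1 - δ) * h n)` of relative length about `p / (1 - δ)`, which exceeds `p` since `p > 0`.
Both contradict the fact that relative gap lengths are eventually below `p + ε`
(`eventually_gapLength_lt`).
-/

open Filter Set

/-- `gapLength E h` = λ(E,h): the length of the largest open subinterval of (0,h)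
containing no point of `E` (0 if no such interval exists). -/
noncomputable def gapLength (E : Set ℝ) (h : ℝ) : ℝ :=
  sSup {l : ℝ | ∃ a b : ℝ, 0 ≤ a ∧ a ≤ b ∧ b ≤ h ∧ Set.Ioo a b ∩ E = ∅ ∧ l = b - a}

/-- The right upper porosity of `E` at 0. -/
noncomputable def upperPorosity (E : Set ℝ) : ℝ :=
  Filter.limsup (fun h => gapLength E h / h) (nhdsWithin (0:ℝ) (Set.Ioi 0))

/-- The right lower porosity of `E` at 0. -/
noncomputable def lowerPorosity (E : Set ℝ) : ℝ :=
  Filter.liminf (fun h => gapLength E h / h) (nhdsWithin (0:ℝ) (Set.Ioi 0))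

/-- `UMP E`: sequences of positive reals tending to 0 along which the upper limit
in the definition of porosity is attained. -/
def UMP (E : Set ℝ) : Set (ℕ → ℝ) :=
  {h | (∀ n, 0 < h n) ∧ Filter.Tendsto h Filter.atTop (nhds 0) ∧
    Filter.Tendsto (fun n => gapLength E (h n) / h n) Filter.atTop (nhds (upperPorosity E))}

/-- The set of all strongly porous at 0 subsets of ℝ⁺. -/
def SP : Set (Set ℝ) := {E | E ⊆ Set.Ici 0 ∧ upperPorosity E = 1}

/-- `I` is an ideal on the set `X`. -/
def IsIdealOn (X : Set ℝ) (I : Set (Set ℝ)) : Prop :=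
  I.Nonempty ∧ (∀ B ∈ I, B ⊆ X) ∧ (∀ B ∈ I, ∀ C : Set ℝ, C ⊆ B → C ∈ I) ∧
    (∀ B ∈ I, ∀ C ∈ I, B ∪ C ∈ I) ∧ X ∉ I

/-- `I` is a `Γ`-maximal ideal on `X`. -/
def IsMaximalIdealIn (X : Set ℝ) (Γ I : Set (Set ℝ)) : Prop :=
  IsIdealOn X I ∧ I ⊆ Γ ∧ ∀ J : Set (Set ℝ), IsIdealOn X J → I ⊆ J → J ⊆ Γ → I = J

/-- `Î(SP)`: the intersection of all SP-maximal ideals on ℝ⁺. -/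
def hatISP : Set (Set ℝ) :=
  {A | ∀ I : Set (Set ℝ), IsMaximalIdealIn (Set.Ici 0) SP I → A ∈ I}

/-- The q-blow up `E(q)` of a set `E ⊆ ℝ⁺`. -/
def blowUp (E : Set ℝ) (q : ℝ) : Set ℝ := ⋃ x ∈ E, Set.Ioo (q⁻¹ * x) (q * x)

lemma le_gapLength {E : Set ℝ} {a b h : ℝ} (ha : 0 ≤ a) (hab : a ≤ b) (hb : b ≤ h)
    (hE : Ioo a b ∩ E = ∅) : b - a ≤ gapLength E h := by
  refine le_csSup ⟨h, ?_⟩ ⟨a, b, ha, hab, hb, hE, rfl⟩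
  rintro l ⟨x, y, hx, hxy, hy, -, rfl⟩
  linarith

lemma gapLength_le {E : Set ℝ} {h : ℝ} (hh : 0 ≤ h) : gapLength E h ≤ h := by
  refine csSup_le ⟨0, 0, 0, le_rfl, le_rfl, hh, by simp, by simp⟩ ?_
  rintro l ⟨x, y, hx, hxy, hy, -, rfl⟩
  linarith

lemma exists_gap {E : Set ℝ} {h l : ℝ} (hh : 0 ≤ h) (hl : l < gapLength E h) :
    ∃ a b : ℝ, 0 ≤ a ∧ a ≤ b ∧ b ≤ h ∧ Ioo a b ∩ E = ∅ ∧ l < b - a := by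
  obtain ⟨_, ⟨a, b, ha, hab, hb, hE, rfl⟩, hlt⟩ :=
    exists_lt_of_lt_csSup (⟨0, 0, 0, le_rfl, le_rfl, hh, by simp, by simp⟩ :
      {l : ℝ | ∃ a b : ℝ, 0 ≤ a ∧ a ≤ b ∧ b ≤ h ∧ Set.Ioo a b ∩ E = ∅ ∧ l = b - a}.Nonempty) hl
  exact ⟨a, b, ha, hab, hb, hE, hlt⟩

lemma eventually_gapLength_lt {E : Set ℝ} {s : ℝ} (hs : upperPorosity E < s) :
    ∀ᶠ h in nhdsWithin (0 : ℝ) (Ioi 0), gapLength E h < s * h := by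
  have hb : IsBoundedUnder (· ≤ ·) (nhdsWithin (0 : ℝ) (Ioi 0))
      (fun h => gapLength E h / h) := by
    refine isBoundedUnder_of_eventually_le (a := 1) ?_
    filter_upwards [self_mem_nhdsWithin] with h hh
    exact (div_le_one hh).2 (gapLength_le (le_of_lt hh))
  filter_upwards [eventually_lt_of_limsup_lt hs hb, self_mem_nhdsWithin] with h h1 hh
  exact (div_lt_iff₀ hh).1 h1

lemma exists_pos_mem {A : Set ℝ} (h2 : upperPorosity A < 1) : ∃ c ∈ A, 0 < c := by
  by_contra! hc
  obtain ⟨h, hlt, hh⟩ := ((eventually_gapLength_lt h2).and self_mem_nhdsWithin).exists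
  have hh : 0 < h := hh
  have := le_gapLength (E := A) le_rfl hh.le le_rfl (by
    ext x
    simp only [mem_inter_iff, mem_Ioo, mem_empty_iff_false, iff_false, not_and]
    intro hx hxA
    linarith [hc x hxA])
  linarith

lemma IsConnected.eq_Ioo {U : Set ℝ} (hU : IsConnected U) (ho : IsOpen U)
    (hb : BddBelow U) (ha : BddAbove U) : U = Ioo (sInf U) (sSup U) := by
  refine Subset.antisymm (fun x hx => ?_) (hU.Ioo_csInf_csSup_subset hb ha)
  obtain ⟨l, u, hlu, hsub⟩ := mem_nhds_iff_exists_Ioo_subset.1 (ho.mem_nhds hx)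
  constructor
  · have := csInf_le hb (hsub (⟨by linarith [hlu.1], by linarith [hlu.1, hlu.2]⟩ :
      (l + x) / 2 ∈ Ioo l u))
    linarith [hlu.1]
  · have := le_csSup ha (hsub (⟨by linarith [hlu.1, hlu.2], by linarith [hlu.2]⟩ :
      (x + u) / 2 ∈ Ioo l u))
    linarith [hlu.2]

/-- A nondegenerate gap `(a, b)` of `A` lies in a bounded component of the interior of `[0, ∞) \ A`
as soon as `A` has a point to the right of it. -/
lemma exists_component {A : Set ℝ} {a b c : ℝ} (ha : 0 ≤ a) (hab : a < b) (hbc : b ≤ c)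
    (hc : c ∈ A) (hE : Ioo a b ∩ A = ∅) :
    ∃ q t : ℝ, (q < t ∧ ∃ x ∈ interior (Ici 0 \ A),
      Ioo q t = connectedComponentIn (interior (Ici 0 \ A)) x) ∧ q ≤ a ∧ b ≤ t := by
  have hsub : Ioo a b ⊆ interior (Ici 0 \ A) := by
    refine interior_maximal (fun y hy => ⟨?_, fun hyA => ?_⟩) isOpen_Ioo
    · exact ha.trans hy.1.le
    · exact (hE ▸ (⟨hy, hyA⟩ : y ∈ Ioo a b ∩ A) : y ∈ (∅ : Set ℝ))
  have hx : (a + b) / 2 ∈ Ioo a b := ⟨by linarith, by linarith⟩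
  set x := (a + b) / 2
  set U := connectedComponentIn (interior (Ici 0 \ A)) x with hU
  have hUsub : U ⊆ Ici 0 \ A := (connectedComponentIn_subset _ _).trans interior_subset
  have hpre : IsPreconnected U := isPreconnected_connectedComponentIn
  have hIU : Ioo a b ⊆ U := isPreconnected_Ioo.subset_connectedComponentIn hx hsub
  have hbelow : BddBelow U := ⟨0, fun y hy => (hUsub hy).1⟩
  have habove : BddAbove U := by
    refine ⟨c, fun y hy => ?_⟩
    by_contra! hcy
    exact (hUsub (hpre.ordConnected.out (hIU hx) hy ⟨by linarith [hx.2], hcy.le⟩)).2 hc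
  have hne : (Ioo a b).Nonempty := ⟨x, hx⟩
  have hq : sInf U ≤ a := by
    rw [← csInf_Ioo hab]
    exact csInf_le_csInf hbelow hne hIU
  have ht : b ≤ sSup U := by
    rw [← csSup_Ioo hab]
    exact csSup_le_csSup habove hne hIU
  exact ⟨sInf U, sSup U, ⟨by linarith, x, hsub hx,
    (IsConnected.eq_Ioo ⟨⟨x, hIU hx⟩, hpre⟩ isOpen_interior.connectedComponentIn hbelow habove).symm⟩, hq, ht⟩

theorem stmt2 (A : Set ℝ) (hA : A ⊆ Set.Ici 0)
    (h1 : 0 < upperPorosity A) (h2 : upperPorosity A < 1)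
    (h : ℕ → ℝ) (hUMP : h ∈ UMP A) :
    ∃ q t : ℕ → ℝ,
      (∀ n, q n < t n ∧ ∃ x ∈ interior (Set.Ici 0 \ A),
        Set.Ioo (q n) (t n) = connectedComponentIn (interior (Set.Ici 0 \ A)) x) ∧
      Filter.Tendsto (fun n => t n / h n) Filter.atTop (nhds 1) := by
  obtain ⟨hpos, hlim, hrat⟩ := hUMP
  set p := upperPorosity A
  obtain ⟨c, hcA, hc⟩ := exists_pos_mem h2
  have hgap : ∀ n : ℕ, ∃ a b : ℝ, 0 ≤ a ∧ a ≤ b ∧ b ≤ h n ∧ Ioo a b ∩ A = ∅ ∧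
      gapLength A (h n) - h n * (1 / ((n : ℝ) + 1)) < b - a := fun n =>
    exists_gap (hpos n).le (sub_lt_self _ (mul_pos (hpos n) Nat.one_div_pos_of_nat))
  choose a b ha hab hb hE hlen using hgap
  -- `r n` bounds the relative length of the `n`-th gap from below.
  obtain ⟨r, hr, hrp⟩ : ∃ r : ℕ → ℝ, (∀ n, r n * h n < b n - a n) ∧
      Tendsto r atTop (nhds p) := by
    refine ⟨fun n => gapLength A (h n) / h n - 1 / ((n : ℝ) + 1), fun n => ?_, ?_⟩
    · have := hlen n
      have h0 := (hpos n).ne'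
      rw [sub_mul, div_mul_cancel₀ _ h0]
      linarith
    · simpa using hrat.sub tendsto_one_div_add_atTop_nhds_zero_nat
  have hgood : ∀ᶠ n in atTop, ∃ q t : ℝ, (q < t ∧ ∃ x ∈ interior (Ici 0 \ A),
      Ioo q t = connectedComponentIn (interior (Ici 0 \ A)) x) ∧ q ≤ a n ∧ b n ≤ t := by
    filter_upwards [hlim.eventually_lt_const hc, hrp.eventually_const_lt h1] with n hn hrn
    refine exists_component (ha n) ?_ ((hb n).trans hn.le) hcA (hE n)
    linarith [hr n, mul_pos hrn (hpos n)]
  obtain ⟨N, hN⟩ := eventually_atTop.1 hgood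
  -- The finitely many remaining indices receive an arbitrary component.
  have hall : ∀ n, ∃ q t : ℝ, (q < t ∧ ∃ x ∈ interior (Ici 0 \ A),
      Ioo q t = connectedComponentIn (interior (Ici 0 \ A)) x) ∧
      (N ≤ n → q ≤ a n ∧ b n ≤ t) := by
    intro n
    by_cases hn : N ≤ n
    · obtain ⟨q, t, hqt, hq⟩ := hN n hn
      exact ⟨q, t, hqt, fun _ => hq⟩
    · obtain ⟨q, t, hqt, -⟩ := hN N le_rfl
      exact ⟨q, t, hqt, fun h' => absurd h' hn⟩
  choose q t hqt hqa using hall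
  refine ⟨q, t, hqt, ?_⟩
  have hscale : ∀ s k : ℝ, p < s → 0 < k →
      ∀ᶠ n in atTop, gapLength A (k * h n) < s * (k * h n) := by
    intro s k hs hk
    refine Tendsto.eventually (tendsto_nhdsWithin_iff.2 ⟨?_, ?_⟩) (eventually_gapLength_lt hs)
    · simpa using hlim.const_mul k
    · exact Eventually.of_forall fun n => mul_pos hk (hpos n)
  refine tendsto_order.2 ⟨fun u hu => ?_, fun u hu => ?_⟩
  · -- Only `u > 0` matters, and `t n` is positive for large `n`, so `u` is replaced by `max u (1/2)`.
    obtain ⟨k, hk0, hk1, huk⟩ : ∃ k : ℝ, 0 < k ∧ k < 1 ∧ u ≤ k :=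
      ⟨max u (1 / 2), by positivity, max_lt hu (by norm_num), le_max_left _ _⟩
    -- With `δ = 1 - k`, this `ε` makes `(p + ε) * k ≤ p - ε`.
    have hε : 0 < p * (1 - k) / 2 := by have := sub_pos.2 hk1; positivity
    filter_upwards [hscale (p + p * (1 - k) / 2) k (by linarith) hk0,
      hrp.eventually_const_lt (sub_lt_self p hε), eventually_ge_atTop N] with n hn hrn hNn
    refine huk.trans_lt ((lt_div_iff₀ (hpos n)).2 ?_)
    by_contra! hle
    have hg := le_gapLength (ha n) (hab n) ((hqa n hNn).2.trans hle) (hE n)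
    have h3 : r n < (p + p * (1 - k) / 2) * k := by
      refine lt_of_mul_lt_mul_right ?_ (hpos n).le
      linarith [hr n]
    nlinarith [mul_pos hε (sub_pos.2 hk1)]
  · have hu0 : 0 < u := by linarith
    -- With `δ = u - 1`, this `ε` solves `δ + (p - ε) = (p + ε) * (1 + δ)`.
    obtain ⟨ε, hε, hεeq⟩ : ∃ ε : ℝ, 0 < ε ∧ ε * (u + 1) = (u - 1) * (1 - p) := by
      refine ⟨(u - 1) * (1 - p) / (u + 1), ?_, ?_⟩
      · have := sub_pos.2 hu
        have := sub_pos.2 h2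
        positivity
      · field_simp
    filter_upwards [hscale (p + ε) u (by linarith) hu0,
      hrp.eventually_const_lt (sub_lt_self p hε), eventually_ge_atTop N] with n hn hrn hNn
    refine (div_lt_iff₀ (hpos n)).2 ?_
    by_contra! hle
    obtain ⟨-, x, -, hcomp⟩ := hqt n
    have hdisj : Ioo (a n) (u * h n) ∩ A = ∅ := by
      refine eq_empty_of_forall_notMem fun y ⟨hy, hyA⟩ => ?_
      have hy' : y ∈ Ioo (q n) (t n) :=
        ⟨(hqa n hNn).1.trans_lt hy.1, hy.2.trans_le hle⟩
      rw [hcomp] at hy'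
      exact (interior_subset (connectedComponentIn_subset _ _ hy')).2 hyA
    have hau : a n ≤ u * h n := by nlinarith [hab n, hb n, hpos n]
    have hg := le_gapLength (ha n) hau le_rfl hdisj
    have h3 : u - 1 + r n < (p + ε) * u := by
      refine lt_of_mul_lt_mul_right ?_ (hpos n).le
      linarith [hr n, hb n]
    linarith
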